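/- Let 0 < s < 1. There exists C > 0, depending only on φ and s, such that for every admissible finite collection 𝓘 = {[a_m,b_m]}_{m=1}^N and every function f : ℝ → ℂ with finite Hölder seminorm [f]_s = sup_{x≠y} |f(x)−f(y)|/|x−y|^s, the rotated family g_m(x) = e^{−2πi a_m x}(f∗φ_m)(x) satisfies ( Σ_{m=1}^N |g_m(x) − g_m(y)|² )^{1/2} ≤ C [f]_s |x−y|^s for all x, y ∈ ℝ. (Uniform boundedness of the rotated family on the homogeneous Hölder space Ċ^s = Ḟ^s_{∞∞}.) -/

import Mathlib

open MeasureTheory Real Set Function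
open scoped FourierTransform ENNReal NNReal

/-- `e2pi t = e^{2πit}`. -/
noncomputable def e2pi (t : ℝ) : ℂ := Complex.exp (2 * (Real.pi : ℂ) * Complex.I * (t : ℂ))

/-- Convolution of two functions on `ℝ`. -/
noncomputable def conv (f g : ℝ → ℂ) (x : ℝ) : ℂ := ∫ t, f t * g (x - t)

/-- The function `φ_m` associated with the interval `[a,b]`: its Fourier transform is
`ξ ↦ 𝓕φ ((ξ - a)/(b - a))`; in space variables it is `x ↦ (b-a) e^{2πiax} φ((b-a)x)`. -/
noncomputable def phim (φ : ℝ → ℂ) (a b : ℝ) (x : ℝ) : ℂ :=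
  ((b - a : ℝ) : ℂ) * e2pi (a * x) * φ ((b - a) * x)

/-- A finite collection of compact intervals `[a m, b m]` is admissible if the intervals are
nondegenerate, pairwise disjoint, and none of them contains `0` in its interior. -/
def Admissible {N : ℕ} (a b : Fin N → ℝ) : Prop :=
  (∀ m, a m < b m) ∧ (∀ m, (0 : ℝ) ∉ Set.Ioo (a m) (b m)) ∧
    ∀ m m', m ≠ m' → Disjoint (Set.Icc (a m) (b m)) (Set.Icc (a m') (b m'))

/-- The rotated Rubio de Francia piece `g_m(x) = e^{-2πi a x} (f ∗ φ_m)(x)`. -/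
noncomputable def rotConv (φ : ℝ → ℂ) (a b : ℝ) (f : ℝ → ℂ) (x : ℝ) : ℂ :=
  e2pi (-(a * x)) * conv f (phim φ a b) x

/-!
Fix `x` and consider only the intervals of length comparable to some `l > 0`. Up to a unimodular
factor, `f ∗ φ_m (x)` is the integral of `f` against a wave packet `ψ_m`, whose Fourier transform is
supported in the reflected interval `-[a_m, b_m]`. As `0` is not interior to the interval, `ψ_m` has
integral zero and `f` may be replaced by `f - f x`. With `w t = 1 + l² (t - x)²` the integral
becomes `∫ ((f - f x) / w) * (w ψ_m)`, where `(f - f x) / w` is square integrable by Hölder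
continuity. Multiplication by the polynomial `w` acts on the Fourier side as a differential
operator, so it does not enlarge Fourier supports: the `w ψ_m` are still pairwise orthogonal, and
Bessel's inequality bounds the square function by `l ^ (-s)`.

The packets at `x` and `y` differ by a factor `O(l |x - y|)` when `l |x - y| ≤ 1`, so the same
argument bounds the increment by `min 1 (l |x - y|) * l ^ (-s)`. Summed over dyadic `l`, the squares
form two geometric series of total size `O(|x - y| ^ (2 s))`.
-/

open scoped SchwartzMap
open SchwartzMap (smulLeftCLM)

section Bessel

variable {ι 𝕜 E α : Type*} [RCLike 𝕜] [NormedAddCommGroup E] [InnerProductSpace 𝕜 E]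
  {S : Finset ι} {B : ℝ}

theorem sum_norm_inner_sq_le_of_pairwise_orthogonal {v : ι → E}
    (hv : (S : Set ι).Pairwise fun m n ↦ inner 𝕜 (v m) (v n) = 0) (hB₀ : 0 ≤ B)
    (hB : ∀ m ∈ S, ‖v m‖ ^ 2 ≤ B) (g : E) :
    ∑ m ∈ S, ‖inner 𝕜 (v m) g‖ ^ 2 ≤ B * ‖g‖ ^ 2 := by
  classical
  set S' := {m ∈ S | v m ≠ 0} with hS'
  let e : S' → E := fun m ↦ ((‖v m‖ : 𝕜)⁻¹) • v m
  have he : Orthonormal 𝕜 e := by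
    refine ⟨fun ⟨m, hm⟩ ↦ ?_, fun ⟨m, hm⟩ ⟨n, hn⟩ hmn ↦ ?_⟩
    · exact norm_smul_inv_norm (Finset.mem_filter.1 hm).2
    · have := hv (Finset.mem_filter.1 hm).1 (Finset.mem_filter.1 hn).1
        (fun h ↦ hmn (Subtype.ext h))
      simp [e, inner_smul_left, inner_smul_right, this]
  have hle : ∀ m : S', ‖inner 𝕜 (v m) g‖ ^ 2 ≤ B * ‖inner 𝕜 (e m) g‖ ^ 2 := by
    rintro ⟨m, hm⟩
    obtain ⟨hmS, hm0⟩ := Finset.mem_filter.1 hm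
    have h0 : ‖v m‖ ≠ 0 := norm_ne_zero_iff.2 hm0
    calc ‖inner 𝕜 (v m) g‖ ^ 2 = ‖v m‖ ^ 2 * ‖inner 𝕜 (e ⟨m, hm⟩) g‖ ^ 2 := by
          simp [e, inner_smul_left]
          field_simp
      _ ≤ B * ‖inner 𝕜 (e ⟨m, hm⟩) g‖ ^ 2 := by gcongr; exact hB m hmS
  calc ∑ m ∈ S, ‖inner 𝕜 (v m) g‖ ^ 2
      = ∑ m : S', ‖inner 𝕜 (v m) g‖ ^ 2 := by
        rw [Finset.sum_coe_sort S' fun m ↦ ‖inner 𝕜 (v m) g‖ ^ 2, hS',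
          Finset.sum_filter_of_ne]
        rintro m - hm h0
        simp [h0] at hm
    _ ≤ ∑ m : S', B * ‖inner 𝕜 (e m) g‖ ^ 2 := Finset.sum_le_sum fun m _ ↦ hle m
    _ ≤ B * ‖g‖ ^ 2 := by
        rw [← Finset.mul_sum]
        gcongr
        exact he.sum_inner_products_le g

variable [MeasurableSpace α] {μ : Measure α}

theorem norm_toLp_two_sq {u : α → E} (hu : MemLp u 2 μ) :
    ‖hu.toLp u‖ ^ 2 = ∫ t, ‖u t‖ ^ 2 ∂μ := by
  rw [Lp.norm_toLp, hu.eLpNorm_eq_integral_rpow_norm two_ne_zero ENNReal.ofNat_ne_top,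
    ENNReal.toReal_ofReal (by positivity)]
  simp only [ENNReal.toReal_ofNat, Real.rpow_two, ← Real.sqrt_eq_rpow, ← one_div]
  exact Real.sq_sqrt (by positivity)

theorem sum_norm_integral_mul_sq_le_of_pairwise_orthogonal {ψ : ι → α → 𝕜} {g : α → 𝕜}
    (hg : MemLp g 2 μ) (hψ : ∀ m, MemLp (ψ m) 2 μ)
    (horth : (S : Set ι).Pairwise fun m n ↦ ∫ t, inner 𝕜 (ψ m t) (ψ n t) ∂μ = 0)
    (hB₀ : 0 ≤ B) (hB : ∀ m ∈ S, ∫ t, ‖ψ m t‖ ^ 2 ∂μ ≤ B) :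
    ∑ m ∈ S, ‖∫ t, g t * ψ m t ∂μ‖ ^ 2 ≤ B * ∫ t, ‖g t‖ ^ 2 ∂μ := by
  have inner_toLp {u v : α → 𝕜} (hu : MemLp u 2 μ) (hv : MemLp v 2 μ) :
      inner 𝕜 (hu.toLp u) (hv.toLp v) = ∫ t, inner 𝕜 (u t) (v t) ∂μ := by
    rw [L2.inner_def]
    refine integral_congr_ae ?_
    filter_upwards [hu.coeFn_toLp, hv.coeFn_toLp] with t hut hvt
    rw [hut, hvt]
  have bessel := sum_norm_inner_sq_le_of_pairwise_orthogonal (𝕜 := 𝕜)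
    (v := fun m ↦ (hψ m).toLp (ψ m)) (fun m hm n hn hmn ↦ by
      simpa only [inner_toLp] using horth hm hn hmn) hB₀
    (fun m hm ↦ (norm_toLp_two_sq (hψ m)).trans_le (hB m hm)) (hg.star.toLp _)
  rw [norm_toLp_two_sq] at bessel
  have inner_eq (m : ι) : inner 𝕜 ((hψ m).toLp (ψ m)) (hg.star.toLp _)
      = (starRingEnd 𝕜) (∫ t, g t * ψ m t ∂μ) := by
    simp only [inner_toLp, ← integral_conj, RCLike.inner_apply, map_mul, Pi.star_apply,
      RCLike.star_def]
  simpa only [inner_eq, RCLike.norm_conj, Pi.star_apply, norm_star] using bessel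

end Bessel

section FourierSupport

theorem disjoint_of_subset_closure {X : Type*} [TopologicalSpace X] {U V U' V' : Set X}
    (h : Disjoint U V) (hV : IsOpen V) (hU' : IsOpen U') (hUU' : U' ⊆ closure U)
    (hVV' : V' ⊆ closure V) : Disjoint U' V' :=
  (((h.closure_left hV).mono_left hUU').closure_right hU').mono_right hVV'

variable {V E : Type*} [NormedAddCommGroup V] [InnerProductSpace ℝ V] [FiniteDimensional ℝ V]
  [MeasurableSpace V] [BorelSpace V] [NormedAddCommGroup E]

theorem tsupport_fourier_smulLeftCLM_inner_subset [NormedSpace ℂ E] (f : 𝓢(V, E)) (m : V) :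
    tsupport (𝓕 ⇑(smulLeftCLM E (inner ℝ · m) f)) ⊆ tsupport (𝓕 ⇑f) := by
  have hc : (-(2 * π * Complex.I) : ℂ) ≠ 0 := by simp [Real.pi_ne_zero]
  have h : 𝓕 (smulLeftCLM E (inner ℝ · m) f)
      = (-(2 * π * Complex.I) : ℂ)⁻¹ • LineDeriv.lineDerivOp m (𝓕 f) := by
    rw [SchwartzMap.lineDerivOp_fourier_eq, FourierTransform.fourier_smul, inv_smul_smul₀ hc]
  rw [← SchwartzMap.fourier_coe, ← SchwartzMap.fourier_coe, h]
  refine (closure_mono fun ξ hξ ↦ ?_).trans (SchwartzMap.tsupport_lineDerivOp_subset m (𝓕 f))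
  exact fun h0 ↦ hξ (by simp [h0])

theorem integral_inner_eq_zero_of_disjoint_fourier_support [InnerProductSpace ℂ E]
    [CompleteSpace E] {f g : 𝓢(V, E)}
    (h : Disjoint (support (𝓕 ⇑f)) (support (𝓕 ⇑g))) :
    ∫ x, inner ℂ (f x) (g x) = 0 := by
  rw [← SchwartzMap.integral_inner_fourier_fourier]
  refine integral_eq_zero_of_ae (.of_forall fun ξ ↦ ?_)
  by_cases hξ : ξ ∈ support (𝓕 ⇑f)
  · simp [SchwartzMap.fourier_coe, notMem_support.1 (Set.disjoint_left.1 h hξ)]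
  · simp [SchwartzMap.fourier_coe, notMem_support.1 hξ]

variable [NormedSpace ℂ E]

theorem integral_eq_zero_of_notMem_support_fourier {f : ℝ → E} (hf : 0 ∉ support (𝓕 f)) :
    ∫ t, f t = 0 := by
  simpa [Real.fourier_real_eq] using notMem_support.1 hf

theorem hasTemperateGrowth_polynomial_eval (p : Polynomial ℝ) :
    (fun t ↦ p.eval t).HasTemperateGrowth := by
  induction p using Polynomial.induction_on' with
  | add p q hp hq =>
    simp only [Polynomial.eval_add]
    exact hp.add hq
  | monomial n r =>
    simp only [Polynomial.eval_monomial]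
    fun_prop

theorem tsupport_fourier_smulLeftCLM_polynomial_subset (p : Polynomial ℝ) (f : 𝓢(ℝ, E)) :
    tsupport (𝓕 ⇑(smulLeftCLM E (fun t ↦ p.eval t) f)) ⊆ tsupport (𝓕 ⇑f) := by
  simp only [← SchwartzMap.fourier_coe]
  induction p using Polynomial.induction_on generalizing f with
  | C c =>
    simp only [Polynomial.eval_C, SchwartzMap.smulLeftCLM_const, FunLike.coe_smul, Pi.smul_apply,
      ContinuousLinearMap.id_apply, FourierTransform.fourier_smul]
    exact tsupport_smul_subset_right (fun _ ↦ c) _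
  | add p q hp hq =>
    simp only [Polynomial.eval_add]
    rw [show (fun t ↦ p.eval t + q.eval t) = (fun t ↦ p.eval t) + fun t ↦ q.eval t from rfl,
      SchwartzMap.smulLeftCLM_add (hasTemperateGrowth_polynomial_eval p)
      (hasTemperateGrowth_polynomial_eval q), add_apply,
      FourierTransform.fourier_add]
    exact (tsupport_add _ _).trans (union_subset (hp f) (hq f))
  | monomial n c hn =>
    have hsplit : smulLeftCLM E (fun t ↦ (Polynomial.C c * Polynomial.X ^ (n + 1)).eval t) f
        = smulLeftCLM E (fun t ↦ (Polynomial.C c * Polynomial.X ^ n).eval t)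
          (smulLeftCLM E (inner ℝ · (1 : ℝ)) f) := by
      rw [SchwartzMap.smulLeftCLM_smulLeftCLM_apply (hasTemperateGrowth_polynomial_eval _)
        (by fun_prop)]
      congr
      ext t
      simp [pow_succ, mul_assoc]
    rw [hsplit]
    exact (hn _).trans (tsupport_fourier_smulLeftCLM_inner_subset f 1)

end FourierSupport

/-- The quadratic weight `1 + l²(t - c)²`: dividing by it makes functions of sublinear growth
square integrable, and being a polynomial in `t` it does not enlarge Fourier supports. -/
def quadWeight (l c t : ℝ) : ℝ := 1 + (l * (t - c)) ^ 2

section QuadWeight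

variable {l c : ℝ}

theorem one_le_quadWeight (l c t : ℝ) : 1 ≤ quadWeight l c t :=
  le_add_of_nonneg_right (sq_nonneg _)

theorem quadWeight_pos (l c t : ℝ) : 0 < quadWeight l c t :=
  one_pos.trans_le (one_le_quadWeight l c t)

theorem continuous_quadWeight (l c : ℝ) : Continuous (quadWeight l c) := by
  unfold quadWeight
  fun_prop

theorem quadWeight_eq_polynomial_eval (l c : ℝ) : ∃ p : Polynomial ℝ, quadWeight l c = p.eval :=
  ⟨1 + (Polynomial.C l * (Polynomial.X - Polynomial.C c)) ^ 2, by ext t; simp [quadWeight]⟩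

theorem hasTemperateGrowth_quadWeight (l c : ℝ) : (quadWeight l c).HasTemperateGrowth := by
  obtain ⟨p, hp⟩ := quadWeight_eq_polynomial_eval l c
  exact hp ▸ hasTemperateGrowth_polynomial_eval p

theorem integrable_inv_quadWeight (hl : l ≠ 0) (c : ℝ) :
    Integrable fun t ↦ (quadWeight l c t)⁻¹ :=
  (integrable_inv_one_add_sq.comp_mul_left' hl).comp_sub_right c

theorem integral_inv_quadWeight (hl : 0 < l) (c : ℝ) :
    ∫ t, (quadWeight l c t)⁻¹ = π / l := by
  unfold quadWeight
  rw [integral_sub_right_eq_self (fun t ↦ (1 + (l * t) ^ 2)⁻¹) c,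
    Measure.integral_comp_mul_left (fun t ↦ (1 + t ^ 2)⁻¹), integral_univ_inv_one_add_sq,
    abs_of_pos (inv_pos.2 hl), smul_eq_mul, inv_mul_eq_div]

theorem memLp_two_of_norm_sq_le_inv_quadWeight {E : Type*} [NormedAddCommGroup E] {u : ℝ → E}
    {M : ℝ} (hl : l ≠ 0) (hu : AEStronglyMeasurable u)
    (hM : ∀ t, ‖u t‖ ^ 2 ≤ M * (quadWeight l c t)⁻¹) : MemLp u 2 :=
  (memLp_two_iff_integrable_sq_norm hu).2 <|
    ((integrable_inv_quadWeight hl c).const_mul M).mono' (hu.norm.pow 2)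
      (.of_forall fun t ↦ by simpa using hM t)

theorem integral_norm_sq_le_of_norm_sq_le_inv_quadWeight {E : Type*} [NormedAddCommGroup E]
    {u : ℝ → E} {M : ℝ} (hl : 0 < l) (hM : ∀ t, ‖u t‖ ^ 2 ≤ M * (quadWeight l c t)⁻¹) :
    ∫ t, ‖u t‖ ^ 2 ≤ M * (π / l) := by
  rw [← integral_inv_quadWeight hl c, ← integral_const_mul]
  exact integral_mono_of_nonneg (.of_forall fun t ↦ by positivity)
    ((integrable_inv_quadWeight hl.ne' c).const_mul M) (.of_forall hM)

theorem abs_rpow_sq_le_quadWeight {s : ℝ} (hs₀ : 0 ≤ s) (hs₁ : s ≤ 1) (hl : 0 < l) (c t : ℝ) :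
    (|t - c| ^ s) ^ 2 ≤ (l ^ (-s)) ^ 2 * quadWeight l c t := by
  have hmax : (l * |t - c|) ^ s ≤ max 1 (l * |t - c|) := by
    rcases le_total (l * |t - c|) 1 with h | h
    · exact le_max_of_le_left (rpow_le_one (by positivity) h hs₀)
    · exact le_max_of_le_right (rpow_le_self_of_one_le h hs₁)
  have hweight : max 1 (l * |t - c|) ^ 2 ≤ quadWeight l c t := by
    rcases max_choice 1 (l * |t - c|) with h | h <;> rw [h]
    · simpa using one_le_quadWeight l c t
    · rw [quadWeight, mul_pow, mul_pow, sq_abs]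
      linarith
  calc (|t - c| ^ s) ^ 2 = (l ^ (-s)) ^ 2 * ((l * |t - c|) ^ s) ^ 2 := by
        rw [mul_rpow hl.le (abs_nonneg _), ← mul_pow, ← mul_assoc, ← rpow_add hl]
        simp
    _ ≤ (l ^ (-s)) ^ 2 * max 1 (l * |t - c|) ^ 2 := by gcongr
    _ ≤ (l ^ (-s)) ^ 2 * quadWeight l c t := by gcongr

theorem disjoint_support_fourier_smulLeftCLM_quadWeight {E : Type*} [NormedAddCommGroup E]
    [NormedSpace ℂ E] (l c : ℝ) {f g : 𝓢(ℝ, E)}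
    (h : Disjoint (support (𝓕 ⇑f)) (support (𝓕 ⇑g))) :
    Disjoint (support (𝓕 ⇑(smulLeftCLM E (quadWeight l c) f)))
      (support (𝓕 ⇑(smulLeftCLM E (quadWeight l c) g))) := by
  obtain ⟨p, hp⟩ := quadWeight_eq_polynomial_eval l c
  have support_subset (f : 𝓢(ℝ, E)) :
      support (𝓕 ⇑(smulLeftCLM E (quadWeight l c) f)) ⊆ tsupport (𝓕 ⇑f) :=
    (subset_tsupport _).trans (hp ▸ tsupport_fourier_smulLeftCLM_polynomial_subset p f)
  have isOpen_support (f : 𝓢(ℝ, E)) : IsOpen (support (𝓕 ⇑f)) :=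
    (𝓕 f).continuous.isOpen_support
  exact disjoint_of_subset_closure h (isOpen_support g) (isOpen_support _) (support_subset f)
    (support_subset g)

theorem norm_smulLeftCLM_quadWeight_sq_le {ψ : 𝓢(ℝ, ℂ)} {M : ℝ}
    (hM : ∀ t, ‖ψ t‖ ≤ M * (quadWeight l c t ^ 2)⁻¹) (t : ℝ) :
    ‖smulLeftCLM ℂ (quadWeight l c) ψ t‖ ^ 2 ≤ M ^ 2 * (quadWeight l c t)⁻¹ := by
  have hw := quadWeight_pos l c t
  calc ‖smulLeftCLM ℂ (quadWeight l c) ψ t‖ ^ 2 = (quadWeight l c t * ‖ψ t‖) ^ 2 := by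
        rw [SchwartzMap.smulLeftCLM_apply_apply (hasTemperateGrowth_quadWeight l c), norm_smul,
          norm_of_nonneg hw.le]
    _ ≤ (quadWeight l c t * (M * (quadWeight l c t ^ 2)⁻¹)) ^ 2 := by
        gcongr
        exact hM t
    _ = M ^ 2 * (quadWeight l c t)⁻¹ * (quadWeight l c t)⁻¹ := by field_simp
    _ ≤ M ^ 2 * (quadWeight l c t)⁻¹ :=
        mul_le_of_le_one_right (by positivity) (inv_le_one_of_one_le₀ (one_le_quadWeight l c t))

end QuadWeight

/-- The increment of `f` based at `c`, damped by the weight `quadWeight l c`; for a Hölder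
function it is square integrable. -/
noncomputable def weightedIncrement (f : ℝ → ℂ) (l c t : ℝ) : ℂ := (f t - f c) / quadWeight l c t

section Holder

variable {f : ℝ → ℂ} {K s : ℝ≥0} {l c : ℝ}

theorem exists_holderWith_of_norm_sub_le {E : Type*} [SeminormedAddCommGroup E] {f : ℝ → E} {K : ℝ}
    (hf : ∀ x y, ‖f x - f y‖ ≤ K * |x - y| ^ (s : ℝ)) :
    ∃ K' : ℝ≥0, (K' : ℝ) = K ∧ HolderWith K' s f := by
  have hK : 0 ≤ K := by simpa using (norm_nonneg _).trans (hf 1 0)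
  lift K to ℝ≥0 using hK
  refine ⟨K, rfl, fun x y ↦ ?_⟩
  rw [edist_nndist, edist_nndist, ← ENNReal.coe_rpow_of_nonneg _ s.coe_nonneg]
  norm_cast
  rw [← NNReal.coe_le_coe]
  simpa [dist_eq_norm] using hf x y

theorem norm_weightedIncrement_sq_le (hs : s ≤ 1) (hf : HolderWith K s f) (hl : 0 < l)
    (c t : ℝ) :
    ‖weightedIncrement f l c t‖ ^ 2 ≤ (K * l ^ (-s : ℝ)) ^ 2 * (quadWeight l c t)⁻¹ := by
  have hw := quadWeight_pos l c t
  have hinc : ‖f t - f c‖ ≤ K * |t - c| ^ (s : ℝ) := by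
    simpa only [dist_eq_norm, Real.norm_eq_abs] using hf.dist_le t c
  calc ‖weightedIncrement f l c t‖ ^ 2 = ‖f t - f c‖ ^ 2 / quadWeight l c t ^ 2 := by
        rw [weightedIncrement, norm_div, Complex.norm_real, norm_of_nonneg hw.le, div_pow]
    _ ≤ (K * |t - c| ^ (s : ℝ)) ^ 2 / quadWeight l c t ^ 2 := by gcongr
    _ ≤ K ^ 2 * ((l ^ (-s : ℝ)) ^ 2 * quadWeight l c t) / quadWeight l c t ^ 2 := by
        rw [mul_pow]
        gcongr
        exact abs_rpow_sq_le_quadWeight s.coe_nonneg hs hl c t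
    _ = (K * l ^ (-s : ℝ)) ^ 2 * (quadWeight l c t)⁻¹ := by field_simp

theorem memLp_two_weightedIncrement (hs₀ : 0 < s) (hs₁ : s ≤ 1) (hf : HolderWith K s f)
    (hl : 0 < l) (c : ℝ) : MemLp (weightedIncrement f l c) 2 := by
  have hcont : Continuous (weightedIncrement f l c) :=
    ((hf.continuous hs₀).sub continuous_const).div
      (Complex.continuous_ofReal.comp (continuous_quadWeight l c))
      fun t ↦ Complex.ofReal_ne_zero.2 (quadWeight_pos l c t).ne'
  exact memLp_two_of_norm_sq_le_inv_quadWeight hl.ne' hcont.aestronglyMeasurable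
    (norm_weightedIncrement_sq_le hs₁ hf hl c)

theorem weightedIncrement_mul_smulLeftCLM_quadWeight (f : ℝ → ℂ) (l c : ℝ) (ψ : 𝓢(ℝ, ℂ)) (t : ℝ) :
    weightedIncrement f l c t * smulLeftCLM ℂ (quadWeight l c) ψ t = f t * ψ t - f c * ψ t := by
  have hw : (quadWeight l c t : ℂ) ≠ 0 := Complex.ofReal_ne_zero.2 (quadWeight_pos l c t).ne'
  rw [SchwartzMap.smulLeftCLM_apply_apply (hasTemperateGrowth_quadWeight l c), weightedIncrement,
    Complex.real_smul]
  field_simp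

theorem integrable_holderWith_mul_schwartz (hs₀ : 0 < s) (hs₁ : s ≤ 1) (hf : HolderWith K s f)
    (ψ : 𝓢(ℝ, ℂ)) : Integrable fun t ↦ f t * ψ t := by
  have h := ((memLp_two_weightedIncrement hs₀ hs₁ hf one_pos 0).integrable_mul
    ((smulLeftCLM ℂ (quadWeight 1 0) ψ).memLp 2)).add (ψ.integrable.const_mul (f 0))
  refine h.congr (.of_forall fun t ↦ ?_)
  simp [weightedIncrement_mul_smulLeftCLM_quadWeight]

theorem integral_holderWith_mul_eq_integral_weightedIncrement_mul (hs₀ : 0 < s) (hs₁ : s ≤ 1)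
    (hf : HolderWith K s f) (l c : ℝ) {ψ : 𝓢(ℝ, ℂ)} (hψ : ∫ t, ψ t = 0) :
    ∫ t, f t * ψ t = ∫ t, weightedIncrement f l c t * smulLeftCLM ℂ (quadWeight l c) ψ t := by
  simp only [weightedIncrement_mul_smulLeftCLM_quadWeight]
  rw [integral_sub (integrable_holderWith_mul_schwartz hs₀ hs₁ hf ψ) (ψ.integrable.const_mul _),
    integral_const_mul, hψ, mul_zero, sub_zero]

theorem sum_norm_integral_holderWith_mul_schwartz_sq_le {ι : Type*} {S : Finset ι}
    {ψ : ι → 𝓢(ℝ, ℂ)} {U : ι → Set ℝ} {A : ℝ} (hs₀ : 0 < s) (hs₁ : s ≤ 1)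
    (hf : HolderWith K s f) (hl : 0 < l)
    (hU₀ : ∀ m ∈ S, 0 ∉ U m) (hU : (S : Set ι).PairwiseDisjoint U)
    (hψ : ∀ m ∈ S, support (𝓕 ⇑(ψ m)) ⊆ U m)
    (hA : ∀ m ∈ S, ∀ t, ‖ψ m t‖ ≤ A * l * (quadWeight l c t ^ 2)⁻¹) :
    ∑ m ∈ S, ‖∫ t, f t * ψ m t‖ ^ 2 ≤ (π * A * (K * l ^ (-s : ℝ))) ^ 2 :=
  calc ∑ m ∈ S, ‖∫ t, f t * ψ m t‖ ^ 2
      = ∑ m ∈ S, ‖∫ t, weightedIncrement f l c t * smulLeftCLM ℂ (quadWeight l c) (ψ m) t‖ ^ 2 :=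
        Finset.sum_congr rfl fun m hm ↦ by
          rw [integral_holderWith_mul_eq_integral_weightedIncrement_mul hs₀ hs₁ hf l c
            (integral_eq_zero_of_notMem_support_fourier (notMem_subset (hψ m hm) (hU₀ m hm)))]
    _ ≤ (A * l) ^ 2 * (π / l) * ∫ t, ‖weightedIncrement f l c t‖ ^ 2 :=
        sum_norm_integral_mul_sq_le_of_pairwise_orthogonal
          (memLp_two_weightedIncrement hs₀ hs₁ hf hl c)
          (fun m ↦ (smulLeftCLM ℂ (quadWeight l c) (ψ m)).memLp 2)
          (fun m hm n hn hmn ↦ integral_inner_eq_zero_of_disjoint_fourier_support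
            (disjoint_support_fourier_smulLeftCLM_quadWeight l c
              ((hU hm hn hmn).mono (hψ m hm) (hψ n hn))))
          (by positivity)
          fun m hm ↦ integral_norm_sq_le_of_norm_sq_le_inv_quadWeight hl
            (norm_smulLeftCLM_quadWeight_sq_le (hA m hm))
    _ ≤ (A * l) ^ 2 * (π / l) * ((K * l ^ (-s : ℝ)) ^ 2 * (π / l)) := by
        gcongr
        exact integral_norm_sq_le_of_norm_sq_le_inv_quadWeight hl
          (norm_weightedIncrement_sq_le hs₁ hf hl c)
    _ = (π * A * (K * l ^ (-s : ℝ))) ^ 2 := by field_simp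

end Holder

section SchwartzDecay

variable {E F : Type*} [NormedAddCommGroup E]

theorem one_add_norm_sq_le_two_mul (u v : E) :
    1 + ‖u‖ ^ 2 ≤ 2 * (1 + ‖u - v‖ ^ 2) * (1 + ‖v‖ ^ 2) := by
  have htri : ‖u‖ ≤ ‖u - v‖ + ‖v‖ := norm_le_norm_sub_add u v
  calc 1 + ‖u‖ ^ 2 ≤ 1 + (‖u - v‖ + ‖v‖) ^ 2 := by gcongr
    _ ≤ 1 + 2 * (‖u - v‖ ^ 2 + ‖v‖ ^ 2) := by gcongr; exact add_sq_le
    _ ≤ 2 * (1 + ‖u - v‖ ^ 2) * (1 + ‖v‖ ^ 2) := by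
        linarith [mul_nonneg (sq_nonneg ‖u - v‖) (sq_nonneg ‖v‖)]

variable [NormedSpace ℝ E] [NormedAddCommGroup F] [NormedSpace ℝ F]

theorem exists_norm_schwartz_le (f : 𝓢(E, F)) (k : ℕ) :
    ∃ D, 0 < D ∧ ∀ u, ‖f u‖ ≤ D * ((1 + ‖u‖ ^ 2) ^ k)⁻¹ := by
  obtain ⟨D, hD, hf⟩ : ∃ D, 0 < D ∧ ∀ u, (1 + ‖u‖) ^ (2 * k) * ‖f u‖ ≤ D := by
    have h := fun u ↦ SchwartzMap.one_add_le_sup_seminorm_apply (𝕜 := ℝ) (m := (2 * k, 0)) le_rfl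
      le_rfl f u
    simp only [norm_iteratedFDeriv_zero] at h
    exact ⟨_, lt_max_of_lt_left one_pos, fun u ↦ le_max_of_le_right (h u)⟩
  refine ⟨D, hD, fun u ↦ ?_⟩
  rw [← div_eq_mul_inv, le_div_iff₀' (by positivity)]
  have hsq : 1 + ‖u‖ ^ 2 ≤ (1 + ‖u‖) ^ 2 := by linarith [add_sq 1 ‖u‖, norm_nonneg u]
  calc (1 + ‖u‖ ^ 2) ^ k * ‖f u‖ ≤ ((1 + ‖u‖) ^ 2) ^ k * ‖f u‖ := by gcongr
    _ ≤ D := by rw [← pow_mul]; exact hf u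

theorem exists_norm_schwartz_sub_le (f : 𝓢(E, F)) (k : ℕ) :
    ∃ D, 0 < D ∧ ∀ u v, ‖f u - f v‖ ≤
      D * ‖u - v‖ * (1 + ‖u - v‖ ^ 2) ^ k * ((1 + ‖u‖ ^ 2) ^ k)⁻¹ := by
  obtain ⟨D, hD, hf⟩ := exists_norm_schwartz_le (SchwartzMap.fderivCLM ℝ E F f) k
  refine ⟨2 ^ k * D, by positivity, fun u v ↦ ?_⟩
  have hderiv : ∀ z ∈ segment ℝ v u, ‖fderiv ℝ f z‖ ≤
      2 ^ k * D * (1 + ‖u - v‖ ^ 2) ^ k * ((1 + ‖u‖ ^ 2) ^ k)⁻¹ := fun z hz ↦ by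
    have hdist : ‖u - z‖ ≤ ‖u - v‖ := by
      rw [norm_sub_rev u z, norm_sub_rev u v]
      exact norm_sub_le_of_mem_segment (segment_symm ℝ v u ▸ hz)
    have hweight : (1 + ‖u‖ ^ 2) ^ k ≤ (2 * (1 + ‖u - v‖ ^ 2) * (1 + ‖z‖ ^ 2)) ^ k := by
      gcongr
      exact (one_add_norm_sq_le_two_mul u z).trans (by gcongr)
    calc ‖fderiv ℝ f z‖ ≤ D * ((1 + ‖z‖ ^ 2) ^ k)⁻¹ := hf z
      _ ≤ D * ((1 + ‖u - v‖ ^ 2) ^ k * 2 ^ k * ((1 + ‖u‖ ^ 2) ^ k)⁻¹) := by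
          gcongr
          rw [← div_eq_mul_inv, inv_eq_one_div, div_le_div_iff₀ (by positivity) (by positivity),
            one_mul]
          exact hweight.trans_eq (by simp only [mul_pow]; ring)
      _ = 2 ^ k * D * (1 + ‖u - v‖ ^ 2) ^ k * ((1 + ‖u‖ ^ 2) ^ k)⁻¹ := by ring
  calc ‖f u - f v‖
      ≤ 2 ^ k * D * (1 + ‖u - v‖ ^ 2) ^ k * ((1 + ‖u‖ ^ 2) ^ k)⁻¹ * ‖u - v‖ :=
        (convex_segment v u).norm_image_sub_le_of_norm_fderiv_le
          (fun z _ ↦ f.differentiableAt) hderiv (left_mem_segment ℝ v u) (right_mem_segment ℝ v u)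
    _ = _ := by ring

end SchwartzDecay

section Exponential

theorem e2pi_eq_fourierChar (t : ℝ) : e2pi t = 𝐞 t := by
  rw [e2pi, fourierChar_apply]
  push_cast
  ring_nf

theorem norm_e2pi (t : ℝ) : ‖e2pi t‖ = 1 := by
  rw [e2pi_eq_fourierChar, Circle.norm_coe]

theorem e2pi_add (s t : ℝ) : e2pi (s + t) = e2pi s * e2pi t := by
  simp only [e2pi_eq_fourierChar, AddChar.map_add_eq_mul, Circle.coe_mul]

theorem fourier_eq_integral_e2pi_mul (f : ℝ → ℂ) (ξ : ℝ) :
    𝓕 f ξ = ∫ t, e2pi (-(t * ξ)) * f t := by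
  simp only [Real.fourier_real_eq, e2pi_eq_fourierChar, Circle.smul_def, smul_eq_mul]

theorem iteratedDeriv_e2pi (n : ℕ) :
    iteratedDeriv n e2pi = fun t ↦ (2 * π * Complex.I) ^ n * e2pi t := by
  have hderiv (t : ℝ) : HasDerivAt e2pi (2 * π * Complex.I * e2pi t) t := by
    simpa only [← e2pi_eq_fourierChar] using Real.hasDerivAt_fourierChar t
  induction n with
  | zero => simp
  | succ n ih =>
    ext t
    rw [iteratedDeriv_succ, ih, ((hderiv t).const_mul _).deriv]
    ring

theorem hasTemperateGrowth_e2pi : e2pi.HasTemperateGrowth := by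
  refine ⟨?_, fun n ↦ ⟨0, (2 * π) ^ n, fun t ↦ ?_⟩⟩
  · unfold e2pi
    exact (contDiff_const.mul Complex.ofRealCLM.contDiff).cexp
  · simp [norm_iteratedFDeriv_eq_norm_iteratedDeriv, iteratedDeriv_e2pi, norm_e2pi,
      abs_of_pos pi_pos]

theorem hasTemperateGrowth_e2pi_neg_mul (a : ℝ) :
    (fun t ↦ e2pi (-(a * t))).HasTemperateGrowth :=
  hasTemperateGrowth_e2pi.comp (f := fun t ↦ -(a * t)) (by fun_prop)

end Exponential

/-- The Schwartz function `t ↦ e^{-2πiat} (b - a) φ((b - a)(x - t))`, against which one integrates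
`f` to obtain `rotConv φ a b f x`. -/
noncomputable def wavePacket (φ : 𝓢(ℝ, ℂ)) {a b : ℝ} (hab : a < b) (x : ℝ) : 𝓢(ℝ, ℂ) :=
  smulLeftCLM ℂ (fun t ↦ e2pi (-(a * t))) (((b - a : ℝ) : ℂ) •
    SchwartzMap.compSubConstCLM ℂ x (SchwartzMap.compCLMOfContinuousLinearEquiv ℂ
      (ContinuousLinearEquiv.unitsEquivAut ℝ (Units.mk0 (a - b) (sub_neg.2 hab).ne)) φ))

section WavePacket

variable {φ : 𝓢(ℝ, ℂ)} {a b l D : ℝ}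

theorem wavePacket_apply (φ : 𝓢(ℝ, ℂ)) (hab : a < b) (x t : ℝ) :
    wavePacket φ hab x t = e2pi (-(a * t)) * (((b - a : ℝ) : ℂ) * φ ((b - a) * (x - t))) := by
  have harg : (t - x) * (a - b) = (b - a) * (x - t) := by ring
  rw [wavePacket, SchwartzMap.smulLeftCLM_apply_apply (hasTemperateGrowth_e2pi_neg_mul a)]
  simp [SchwartzMap.compSubConstCLM_apply, harg]

theorem rotConv_eq_integral_mul_wavePacket (φ : 𝓢(ℝ, ℂ)) (hab : a < b) (f : ℝ → ℂ) (x : ℝ) :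
    rotConv φ a b f x = ∫ t, f t * wavePacket φ hab x t := by
  rw [rotConv, conv, ← integral_const_mul]
  refine integral_congr_ae (.of_forall fun t ↦ ?_)
  have hphase : e2pi (-(a * t)) = e2pi (-(a * x)) * e2pi (a * (x - t)) := by
    rw [← e2pi_add]
    ring_nf
  simp only [phim, wavePacket_apply, hphase]
  ring

theorem fourier_wavePacket (φ : 𝓢(ℝ, ℂ)) (hab : a < b) (x ξ : ℝ) :
    𝓕 ⇑(wavePacket φ hab x) ξ = e2pi (-((a + ξ) * x)) * 𝓕 ⇑φ (-(a + ξ) / (b - a)) := by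
  have hL : 0 < b - a := sub_pos.2 hab
  set η := -(a + ξ) / (b - a) with hη
  let g : ℝ → ℂ := fun u ↦ e2pi (-(u * η)) * φ u
  have hintegrand (t : ℝ) : e2pi (-(t * ξ)) * wavePacket φ hab x t
      = e2pi (-((a + ξ) * x)) * ((b - a : ℝ) : ℂ) * g ((b - a) * (x - t)) := by
    have hphase : e2pi (-(t * ξ)) * e2pi (-(a * t))
        = e2pi (-((a + ξ) * x)) * e2pi (-((b - a) * (x - t) * η)) := by
      rw [← e2pi_add, ← e2pi_add, hη]
      field_simp
      ring_nf
    rw [wavePacket_apply, ← mul_assoc, hphase]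
    ring
  have hsubst : ∫ t, g ((b - a) * (x - t)) = (b - a)⁻¹ • ∫ u, g u := by
    rw [integral_sub_left_eq_self (fun t ↦ g ((b - a) * t)), Measure.integral_comp_mul_left,
      abs_of_pos (inv_pos.2 hL)]
  simp_rw [fourier_eq_integral_e2pi_mul, hintegrand]
  rw [integral_const_mul, hsubst, Complex.real_smul, mul_assoc, ← mul_assoc ((b - a : ℝ) : ℂ),
    ← Complex.ofReal_mul, mul_inv_cancel₀ hL.ne', Complex.ofReal_one, one_mul]

theorem support_fourier_wavePacket_subset (hφ : support (𝓕 ⇑φ) ⊆ Ioo 0 1) (hab : a < b)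
    (x : ℝ) : support (𝓕 ⇑(wavePacket φ hab x)) ⊆ Neg.neg ⁻¹' Ioo a b := by
  intro ξ hξ
  rw [mem_support, fourier_wavePacket] at hξ
  obtain ⟨h₀, h₁⟩ := hφ (right_ne_zero_of_mul hξ)
  rw [lt_div_iff₀ (sub_pos.2 hab)] at h₀
  rw [div_lt_iff₀ (sub_pos.2 hab)] at h₁
  exact ⟨by linarith, by linarith⟩

theorem quadWeight_le_one_add_norm_sq (hl : 0 ≤ l) (hlb : l ≤ b - a) (x t : ℝ) :
    quadWeight l x t ≤ 1 + ‖(b - a) * (x - t)‖ ^ 2 := by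
  rw [quadWeight, Real.norm_eq_abs, sq_abs, mul_pow, mul_pow, sub_sq_comm t x]
  gcongr

theorem norm_wavePacket_le (hD : ∀ u, ‖φ u‖ ≤ D * ((1 + ‖u‖ ^ 2) ^ 2)⁻¹) (hab : a < b)
    (hl : 0 < l) (hlb : b - a ∈ Icc l (2 * l)) (x t : ℝ) :
    ‖wavePacket φ hab x t‖ ≤ 2 * D * l * (quadWeight l x t ^ 2)⁻¹ := by
  have hw := quadWeight_pos l x t
  have hD₀ : 0 ≤ D := by simpa using (norm_nonneg _).trans (hD 0)
  calc ‖wavePacket φ hab x t‖ = (b - a) * ‖φ ((b - a) * (x - t))‖ := by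
        rw [wavePacket_apply, norm_mul, norm_e2pi, one_mul, norm_mul, Complex.norm_real,
          norm_of_nonneg (sub_pos.2 hab).le]
    _ ≤ 2 * l * (D * ((1 + ‖(b - a) * (x - t)‖ ^ 2) ^ 2)⁻¹) :=
        mul_le_mul hlb.2 (hD _) (norm_nonneg _) (by positivity)
    _ ≤ 2 * l * (D * (quadWeight l x t ^ 2)⁻¹) := by
        gcongr
        exact quadWeight_le_one_add_norm_sq hl.le hlb.1 x t
    _ = 2 * D * l * (quadWeight l x t ^ 2)⁻¹ := by ring

theorem norm_wavePacket_sub_le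
    (hD : ∀ u v, ‖φ u - φ v‖ ≤
      D * ‖u - v‖ * (1 + ‖u - v‖ ^ 2) ^ 2 * ((1 + ‖u‖ ^ 2) ^ 2)⁻¹) (hab : a < b)
    (hl : 0 < l) (hlb : b - a ∈ Icc l (2 * l)) {x y : ℝ} (hxy : l * |x - y| ≤ 1) (t : ℝ) :
    ‖wavePacket φ hab x t - wavePacket φ hab y t‖
      ≤ 100 * D * (l * |x - y|) * l * (quadWeight l x t ^ 2)⁻¹ := by
  have hw := quadWeight_pos l x t
  have hD₀ : 0 ≤ D := by
    have h : 0 ≤ D * 1 * (1 + 1 ^ 2) ^ 2 := by simpa using (norm_nonneg _).trans (hD 0 1)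
    linarith
  have hstep : ‖(b - a) * (x - t) - (b - a) * (y - t)‖ ≤ 2 * (l * |x - y|) := by
    rw [← mul_sub, sub_sub_sub_cancel_right, norm_mul, Real.norm_eq_abs, Real.norm_eq_abs,
      abs_of_pos (sub_pos.2 hab), ← mul_assoc]
    exact mul_le_mul_of_nonneg_right hlb.2 (abs_nonneg _)
  calc ‖wavePacket φ hab x t - wavePacket φ hab y t‖
      = (b - a) * ‖φ ((b - a) * (x - t)) - φ ((b - a) * (y - t))‖ := by
        rw [wavePacket_apply, wavePacket_apply, ← mul_sub, ← mul_sub, norm_mul, norm_e2pi, one_mul,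
          norm_mul, Complex.norm_real, norm_of_nonneg (sub_pos.2 hab).le]
    _ ≤ 2 * l * (D * (2 * (l * |x - y|)) * (1 + (2 * 1) ^ 2) ^ 2 * (quadWeight l x t ^ 2)⁻¹) := by
        refine mul_le_mul hlb.2 ((hD _ _).trans ?_) (norm_nonneg _) (by positivity)
        gcongr
        · exact hstep.trans (by gcongr)
        · exact quadWeight_le_one_add_norm_sq hl.le hlb.1 x t
    _ = 100 * D * (l * |x - y|) * l * (quadWeight l x t ^ 2)⁻¹ := by ring

end WavePacket

/-- A family of nondegenerate intervals with endpoints `a m`, `b m` whose interiors are pairwise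
disjoint and do not contain `0`. Unlike in `Admissible`, the index type is arbitrary and adjacent
intervals may share an endpoint. -/
structure NonoverlappingIntervals {ι : Type*} (a b : ι → ℝ) : Prop where
  lt (m : ι) : a m < b m
  zero_notMem (m : ι) : (0 : ℝ) ∉ Ioo (a m) (b m)
  disjoint : Pairwise (Disjoint on fun m ↦ Ioo (a m) (b m))

theorem Admissible.nonoverlappingIntervals {N : ℕ} {a b : Fin N → ℝ} (h : Admissible a b) :
    NonoverlappingIntervals a b where
  lt := h.1
  zero_notMem := h.2.1
  disjoint m n hmn := (h.2.2 m n hmn).mono Ioo_subset_Icc_self Ioo_subset_Icc_self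

section Band

variable {φ : 𝓢(ℝ, ℂ)} {f : ℝ → ℂ} {K s : ℝ≥0} {ι : Type*} {a b : ι → ℝ} {S : Finset ι}
  {D l x y : ℝ}

theorem sum_norm_integral_holderWith_mul_schwartz_sq_le_of_intervals {ψ : ι → 𝓢(ℝ, ℂ)}
    (hs₀ : 0 < s) (hs₁ : s ≤ 1) (hf : HolderWith K s f) (h : NonoverlappingIntervals a b)
    (hl : 0 < l) (hψ : ∀ m, support (𝓕 ⇑(ψ m)) ⊆ Neg.neg ⁻¹' Ioo (a m) (b m))
    (hD : ∀ m ∈ S, ∀ t, ‖ψ m t‖ ≤ D * l * (quadWeight l x t ^ 2)⁻¹) :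
    ∑ m ∈ S, ‖∫ t, f t * ψ m t‖ ^ 2 ≤ (π * D * (K * l ^ (-s : ℝ))) ^ 2 :=
  sum_norm_integral_holderWith_mul_schwartz_sq_le hs₀ hs₁ hf hl
    (fun m _ ↦ by simpa only [mem_preimage, neg_zero] using h.zero_notMem m)
    (fun m _ n _ hmn ↦ (h.disjoint hmn).preimage _)
    (fun m _ ↦ hψ m) hD

theorem sum_norm_rotConv_sq_le_of_lengths (hφ : support (𝓕 ⇑φ) ⊆ Ioo 0 1)
    (hD : ∀ u, ‖φ u‖ ≤ D * ((1 + ‖u‖ ^ 2) ^ 2)⁻¹)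
    (hs₀ : 0 < s) (hs₁ : s ≤ 1) (hf : HolderWith K s f) (h : NonoverlappingIntervals a b)
    (hl : 0 < l) (hlS : ∀ m ∈ S, b m - a m ∈ Icc l (2 * l)) :
    ∑ m ∈ S, ‖rotConv φ (a m) (b m) f x‖ ^ 2 ≤ (π * (2 * D) * (K * l ^ (-s : ℝ))) ^ 2 := by
  simp only [fun m ↦ rotConv_eq_integral_mul_wavePacket φ (h.lt m) f]
  exact sum_norm_integral_holderWith_mul_schwartz_sq_le_of_intervals hs₀ hs₁ hf h hl
    (fun m ↦ support_fourier_wavePacket_subset hφ (h.lt m) x)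
    (fun m hm ↦ norm_wavePacket_le hD (h.lt m) hl (hlS m hm) x)

theorem sum_norm_rotConv_sub_sq_le_of_lengths_of_mul_le_one (hφ : support (𝓕 ⇑φ) ⊆ Ioo 0 1)
    (hD : ∀ u v, ‖φ u - φ v‖ ≤
      D * ‖u - v‖ * (1 + ‖u - v‖ ^ 2) ^ 2 * ((1 + ‖u‖ ^ 2) ^ 2)⁻¹)
    (hs₀ : 0 < s) (hs₁ : s ≤ 1) (hf : HolderWith K s f) (h : NonoverlappingIntervals a b)
    (hl : 0 < l) (hlS : ∀ m ∈ S, b m - a m ∈ Icc l (2 * l)) (hxy : l * |x - y| ≤ 1) :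
    ∑ m ∈ S, ‖rotConv φ (a m) (b m) f x - rotConv φ (a m) (b m) f y‖ ^ 2
      ≤ (π * (100 * D * (l * |x - y|)) * (K * l ^ (-s : ℝ))) ^ 2 := by
  let ψ : ι → 𝓢(ℝ, ℂ) := fun m ↦ wavePacket φ (h.lt m) x - wavePacket φ (h.lt m) y
  have hrot (m : ι) :
      rotConv φ (a m) (b m) f x - rotConv φ (a m) (b m) f y = ∫ t, f t * ψ m t := by
    rw [rotConv_eq_integral_mul_wavePacket φ (h.lt m),
      rotConv_eq_integral_mul_wavePacket φ (h.lt m),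
      ← integral_sub (integrable_holderWith_mul_schwartz hs₀ hs₁ hf _)
        (integrable_holderWith_mul_schwartz hs₀ hs₁ hf _)]
    simp only [ψ, sub_apply, mul_sub]
  have hsupp (m : ι) : support (𝓕 ⇑(ψ m)) ⊆ Neg.neg ⁻¹' Ioo (a m) (b m) := by
    rw [show ψ m = wavePacket φ (h.lt m) x + -wavePacket φ (h.lt m) y from sub_eq_add_neg _ _,
      ← SchwartzMap.fourier_coe, FourierTransform.fourier_add, FourierTransform.fourier_neg,
      ← sub_eq_add_neg]
    exact (support_sub _ _).trans (union_subset
      (support_fourier_wavePacket_subset hφ (h.lt m) x)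
      (support_fourier_wavePacket_subset hφ (h.lt m) y))
  simp only [hrot]
  exact sum_norm_integral_holderWith_mul_schwartz_sq_le_of_intervals hs₀ hs₁ hf h hl hsupp
    fun m hm ↦ norm_wavePacket_sub_le hD (h.lt m) hl (hlS m hm) hxy

theorem exists_sum_norm_rotConv_sub_sq_le_of_lengths (hφ : support (𝓕 ⇑φ) ⊆ Ioo 0 1) :
    ∃ A, 0 < A ∧ ∀ {ι : Type*} {a b : ι → ℝ}, NonoverlappingIntervals a b →
      ∀ {f : ℝ → ℂ} {K s : ℝ≥0}, 0 < s → s ≤ 1 → HolderWith K s f → ∀ {l : ℝ}, 0 < l →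
      ∀ {S : Finset ι}, (∀ m ∈ S, b m - a m ∈ Icc l (2 * l)) → ∀ x y : ℝ,
        ∑ m ∈ S, ‖rotConv φ (a m) (b m) f x - rotConv φ (a m) (b m) f y‖ ^ 2
          ≤ (A * min 1 (l * |x - y|) * (K * l ^ (-s : ℝ))) ^ 2 := by
  obtain ⟨D, hD₀, hD⟩ := exists_norm_schwartz_le φ 2
  obtain ⟨D', hD'₀, hD'⟩ := exists_norm_schwartz_sub_le φ 2
  refine ⟨max (4 * π * D) (100 * π * D'), lt_max_of_lt_left (by positivity), ?_⟩
  intro ι a b h f K s hs₀ hs₁ hf l hl S hlS x y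
  rcases le_total (l * |x - y|) 1 with hxy | hxy
  · rw [min_eq_right hxy]
    calc ∑ m ∈ S, ‖rotConv φ (a m) (b m) f x - rotConv φ (a m) (b m) f y‖ ^ 2
        ≤ (π * (100 * D' * (l * |x - y|)) * (K * l ^ (-s : ℝ))) ^ 2 :=
          sum_norm_rotConv_sub_sq_le_of_lengths_of_mul_le_one hφ hD' hs₀ hs₁ hf h hl hlS hxy
      _ = (100 * π * D' * (l * |x - y|) * (K * l ^ (-s : ℝ))) ^ 2 := by ring
      _ ≤ _ := by gcongr; exact le_max_right _ _
  · have hband (z : ℝ) := sum_norm_rotConv_sq_le_of_lengths (x := z) hφ hD hs₀ hs₁ hf h hl hlS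
    rw [min_eq_left hxy]
    calc ∑ m ∈ S, ‖rotConv φ (a m) (b m) f x - rotConv φ (a m) (b m) f y‖ ^ 2
        ≤ ∑ m ∈ S, 2 * (‖rotConv φ (a m) (b m) f x‖ ^ 2 + ‖rotConv φ (a m) (b m) f y‖ ^ 2) := by
          gcongr with m
          exact (pow_le_pow_left₀ (norm_nonneg _) (norm_sub_le _ _) 2).trans add_sq_le
      _ ≤ 2 * ((π * (2 * D) * (K * l ^ (-s : ℝ))) ^ 2
          + (π * (2 * D) * (K * l ^ (-s : ℝ))) ^ 2) := by
          rw [← Finset.mul_sum, Finset.sum_add_distrib]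
          gcongr
          exacts [hband x, hband y]
      _ = (4 * π * D * 1 * (K * l ^ (-s : ℝ))) ^ 2 := by ring
      _ ≤ _ := by gcongr; exact le_max_left _ _

end Band

section DyadicSum

theorem sum_le_tsum_of_sum_fiber_le {ι κ : Type*} [DecidableEq κ] {S : Finset ι} {T : ι → ℝ}
    {g : ι → κ} {w : κ → ℝ} (hw : Summable w) (hw₀ : ∀ n, 0 ≤ w n)
    (h : ∀ n, ∑ m ∈ S with g m = n, T m ≤ w n) : ∑ m ∈ S, T m ≤ ∑' n, w n :=
  calc ∑ m ∈ S, T m = ∑ n ∈ S.image g, ∑ m ∈ S with g m = n, T m :=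
        (Finset.sum_fiberwise_of_maps_to (fun _ hm ↦ Finset.mem_image_of_mem g hm) T).symm
    _ ≤ ∑ n ∈ S.image g, w n := Finset.sum_le_sum fun n _ ↦ h n
    _ ≤ ∑' n, w n := hw.sum_le_tsum _ fun n _ ↦ hw₀ n

theorem summable_sq_min_one_zpow_mul_rpow {q s : ℝ} (hq : 1 < q) (hs₀ : 0 < s) (hs₁ : s < 1) :
    Summable fun n : ℤ ↦ (min 1 (q ^ n) * (q ^ n) ^ (-s)) ^ 2 := by
  have hq₀ : 0 < q := one_pos.trans hq
  have summable_geometric {r : ℝ} (hr : r < 0) : Summable fun n : ℕ ↦ ((q ^ r) ^ 2) ^ n :=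
    summable_geometric_of_lt_one (by positivity)
      (pow_lt_one₀ (by positivity) (rpow_lt_one_of_one_lt_of_neg hq hr) two_ne_zero)
  refine .of_nat_of_neg ((summable_geometric (neg_lt_zero.2 hs₀)).congr fun n ↦ ?_)
    ((summable_geometric (sub_neg.2 hs₁)).congr fun n ↦ ?_)
  · rw [zpow_natCast, min_eq_left (one_le_pow₀ hq.le), one_mul,
      ← rpow_pow_comm hq₀.le, pow_right_comm]
  · have hle : q ^ (-n : ℤ) ≤ 1 := zpow_le_one_of_nonpos₀ hq.le (by simp)
    rw [min_eq_right hle, zpow_neg, zpow_natCast, ← rpow_natCast q n, ← rpow_neg hq₀.le,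
      ← rpow_mul hq₀.le, ← rpow_add hq₀, pow_right_comm, ← rpow_natCast (q ^ (s - 1)),
      ← rpow_mul hq₀.le]
    ring_nf

theorem mem_Icc_of_log_mul_eq {L h : ℝ} {n : ℤ} (hL : 0 < L) (hh : 0 < h)
    (hn : Int.log 2 (L * h) = n) : L ∈ Icc (2 ^ n / h) (2 * (2 ^ n / h)) := by
  have hlo : (2 : ℝ) ^ n ≤ L * h := by
    simpa [hn] using Int.zpow_log_le_self (b := 2) one_lt_two (mul_pos hL hh)
  have hhi : L * h < (2 : ℝ) ^ (n + 1) := by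
    simpa [hn] using Int.lt_zpow_succ_log_self (b := 2) one_lt_two (L * h)
  rw [zpow_add_one₀ two_ne_zero] at hhi
  exact ⟨(div_le_iff₀ hh).2 hlo, by rw [← mul_div_assoc, le_div_iff₀ hh]; linarith⟩

end DyadicSum

theorem exists_sum_norm_rotConv_sub_sq_le {φ : 𝓢(ℝ, ℂ)} (hφ : support (𝓕 ⇑φ) ⊆ Ioo 0 1)
    {s : ℝ≥0} (hs₀ : 0 < s) (hs₁ : s < 1) :
    ∃ C, 0 < C ∧ ∀ {ι : Type*} {a b : ι → ℝ}, NonoverlappingIntervals a b →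
      ∀ {f : ℝ → ℂ} {K : ℝ≥0}, HolderWith K s f → ∀ (S : Finset ι) (x y : ℝ),
        ∑ m ∈ S, ‖rotConv φ (a m) (b m) f x - rotConv φ (a m) (b m) f y‖ ^ 2
          ≤ (C * K * |x - y| ^ (s : ℝ)) ^ 2 := by
  obtain ⟨A, hA₀, hA⟩ := exists_sum_norm_rotConv_sub_sq_le_of_lengths hφ
  let w : ℤ → ℝ := fun n ↦ (min 1 ((2 : ℝ) ^ n) * ((2 : ℝ) ^ n) ^ (-s : ℝ)) ^ 2
  have hw : Summable w := summable_sq_min_one_zpow_mul_rpow one_lt_two hs₀ hs₁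
  have hw₀ (n : ℤ) : 0 < w n := by positivity
  have hsum : 0 < ∑' n, w n := hw.tsum_pos (fun n ↦ (hw₀ n).le) 0 (hw₀ 0)
  refine ⟨A * √(∑' n, w n), by positivity, fun {ι a b} h {f K} hf S x y ↦ ?_⟩
  rcases eq_or_ne x y with rfl | hxy
  · simpa using sq_nonneg (_ : ℝ)
  have hh : 0 < |x - y| := abs_pos.2 (sub_ne_zero.2 hxy)
  set B := A * K * |x - y| ^ (s : ℝ) with hB
  have hfiber (n : ℤ) : ∑ m ∈ S with Int.log 2 ((b m - a m) * |x - y|) = n,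
      ‖rotConv φ (a m) (b m) f x - rotConv φ (a m) (b m) f y‖ ^ 2 ≤ B ^ 2 * w n := by
    refine (hA h hs₀ hs₁.le hf (l := 2 ^ n / |x - y|) (by positivity)
      (fun m hm ↦ mem_Icc_of_log_mul_eq (sub_pos.2 (h.lt m)) hh (Finset.mem_filter.1 hm).2)
      x y).trans_eq ?_
    rw [div_mul_cancel₀ _ hh.ne', div_rpow (by positivity) hh.le, rpow_neg hh.le, div_inv_eq_mul,
      ← mul_pow]
    ring
  calc ∑ m ∈ S, ‖rotConv φ (a m) (b m) f x - rotConv φ (a m) (b m) f y‖ ^ 2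
      ≤ ∑' n, B ^ 2 * w n :=
        sum_le_tsum_of_sum_fiber_le (hw.mul_left _)
          (fun n ↦ mul_nonneg (sq_nonneg _) (hw₀ n).le) hfiber
    _ = (A * √(∑' n, w n) * K * |x - y| ^ (s : ℝ)) ^ 2 := by
        rw [tsum_mul_left, ← Real.sq_sqrt hsum.le, Real.sqrt_sq (Real.sqrt_nonneg _), hB]
        ring

theorem statement6_general (φ : 𝓢(ℝ, ℂ)) (hφ : support (𝓕 ⇑φ) ⊆ Ioo 0 1)
    (s : ℝ) (hs₀ : 0 < s) (hs₁ : s < 1) :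
    ∃ C : ℝ, 0 < C ∧ ∀ {ι : Type*} (a b : ι → ℝ), NonoverlappingIntervals a b →
      ∀ (f : ℝ → ℂ) (K : ℝ), (∀ x y : ℝ, ‖f x - f y‖ ≤ K * |x - y| ^ s) → ∀ x y : ℝ,
        Summable (fun m ↦ ‖rotConv φ (a m) (b m) f x - rotConv φ (a m) (b m) f y‖ ^ 2) ∧
        (∑' m, ‖rotConv φ (a m) (b m) f x - rotConv φ (a m) (b m) f y‖ ^ 2) ^ (1 / 2 : ℝ)
          ≤ C * K * |x - y| ^ s := by
  lift s to ℝ≥0 using hs₀.le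
  obtain ⟨C, hC₀, hC⟩ := exists_sum_norm_rotConv_sub_sq_le hφ hs₀ hs₁
  refine ⟨C, hC₀, fun {ι} a b h f K hf x y ↦ ?_⟩
  obtain ⟨K, rfl, hfK⟩ := exists_holderWith_of_norm_sub_le hf
  have hbound (S : Finset ι) := hC h hfK S x y
  refine ⟨summable_of_sum_le (fun m ↦ by positivity) hbound, ?_⟩
  rw [← Real.sqrt_eq_rpow, Real.sqrt_le_left (by positivity)]
  exact Real.tsum_le_of_sum_le (fun m ↦ by positivity) hbound

/-- uniform boundedness of the rotated family on the homogeneous Hölder space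
`Ċ^s = Ḟ^s_{∞∞}`, `0 < s < 1`: if `[f]_s ≤ K` then the rotated pieces
`g_m(x) = e^{-2πi a_m x}(f∗φ_m)(x)` satisfy `(Σ_m |g_m(x)-g_m(y)|²)^{1/2} ≤ C K |x-y|^s`. -/
theorem statement6 (φ : SchwartzMap ℝ ℂ)
    (hφ : Function.support (𝓕 ⇑φ) ⊆ Set.Ioo 0 1)
    (s : ℝ) (hs0 : 0 < s) (hs1 : s < 1) :
    ∃ C : ℝ, 0 < C ∧ ∀ (N : ℕ) (a b : Fin N → ℝ), Admissible a b →
      ∀ (f : ℝ → ℂ) (K : ℝ),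
        (∀ x y : ℝ, ‖f x - f y‖ ≤ K * |x - y| ^ s) →
        ∀ x y : ℝ,
          (∑ m : Fin N,
              ‖rotConv ⇑φ (a m) (b m) f x - rotConv ⇑φ (a m) (b m) f y‖ ^ 2) ^ (1/2 : ℝ)
            ≤ C * K * |x - y| ^ s := by
  obtain ⟨C, hC₀, hC⟩ := statement6_general φ hφ s hs0 hs1
  exact ⟨C, hC₀, fun N a b h f K hf x y ↦ by
    simpa only [tsum_fintype] using (hC a b h.nonoverlappingIntervals f K hf x y).2⟩
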